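/- arXiv:nlin/0205019 — 3 statements merged into one kernel-verified Lean document; each statement's English description precedes it below -/
import Mathlib

section
/- Let q, a_0, a_1 be nonzero complex constants and let H : ℤ × ℤ → ℂ (written H_ν(n)) satisfy the contiguity relations H_ν(n+1) − H_ν(n) = −a_0² q^{2n}·H_{ν−1}(n) and H_{ν+1}(n) − H_ν(n) = −a_0² a_1² q^{2ν}·H_ν(n−1) for all ν, n ∈ ℤ. Then H satisfies the three-term relation in ν: H_{ν+1}(n) = (1 + a_0² q^{2n} − a_0² a_1² q^{2ν})·H_ν(n) − a_0² q^{2n}·H_{ν−1}(n) for all ν, n ∈ ℤ. -/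
/-- the contiguity relations for `H_ν(n)` imply the three-term
relation in `ν`:
`H_{ν+1}(n) = (1 + a₀²q^{2n} − a₀²a₁²q^{2ν})H_ν(n) − a₀²q^{2n}H_{ν−1}(n)`. -/
theorem H_three_term_in_nu (q a0 a1 : ℂ)
    (hq : q ≠ 0) (ha0 : a0 ≠ 0) (ha1 : a1 ≠ 0)
    (H : ℤ → ℤ → ℂ)
    (hH1 : ∀ ν n : ℤ, H ν (n + 1) - H ν n = -(a0 ^ 2 * q ^ (2 * n)) * H (ν - 1) n)
    (hH2 : ∀ ν n : ℤ, H (ν + 1) n - H ν n = -(a0 ^ 2 * a1 ^ 2 * q ^ (2 * ν)) * H ν (n - 1)) :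
    ∀ ν n : ℤ, H (ν + 1) n =
      (1 + a0 ^ 2 * q ^ (2 * n) - a0 ^ 2 * a1 ^ 2 * q ^ (2 * ν)) * H ν n -
        a0 ^ 2 * q ^ (2 * n) * H (ν - 1) n := by
  intro ν n
  have hA := hH1 ν (n - 1)
  have hB := hH2 ν n
  have hC := hH2 (ν - 1) n
  rw [sub_add_cancel] at hA hC
  have key : q ^ (2 * ν) * q ^ (2 * (n - 1)) = q ^ (2 * n) * q ^ (2 * (ν - 1)) := by
    rw [← zpow_add₀ hq, ← zpow_add₀ hq]
    congr 1
    ring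
  linear_combination hB + (a0 ^ 2 * a1 ^ 2 * q ^ (2 * ν)) * hA - (a0 ^ 2 * q ^ (2 * n)) * hC
    - a0 ^ 4 * a1 ^ 2 * H (ν - 1) (n - 1) * key
end

section
/- Let q, a_0, a_1 be nonzero complex constants and let H : ℤ × ℤ → ℂ (written H_ν(n)) satisfy the contiguity relations H_ν(n+1) − H_ν(n) = −a_0² q^{2n}·H_{ν−1}(n) and H_{ν+1}(n) − H_ν(n) = −a_0² a_1² q^{2ν}·H_ν(n−1) for all ν, n ∈ ℤ. For N ∈ ℤ_{≥0} define φ_ν^{N}(n) = det( H_{ν+i−1}(n+j−1) )_{1 ≤ i,j ≤ N}, with φ_ν^{0}(n) = 1. Then, for every fixed ν ∈ ℤ and N ∈ ℤ_{≥0}, the functions f_0(n) = −a_0 q^{n+2N} · φ_{ν−1}^{N+1}(n) φ_ν^{N}(n) / ( φ_ν^{N+1}(n) φ_{ν−1}^{N}(n) ) and f_1(n) = (1/(a_0² a_1 q^{n+ν+2N−2})) · φ_ν^{N+1}(n) φ_{ν−1}^{N}(n−1) / ( φ_{ν−1}^{N+1}(n−1) φ_ν^{N}(n) ) solve the q-Painlevé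 III system qP3(ν, p) with p = q^{2N+1} (i.e., c = 1), provided all determinants occurring in these expressions are nonzero. -/
/-- `f₀, f₁ : ℤ → ℂ` solve the `q`-Painlevé III system `qP3(ν, p)`. -/
def qP3 (q a0 a1 : ℂ) (ν : ℤ) (p : ℂ) (f0 f1 : ℤ → ℂ) : Prop :=
  ∀ n : ℤ,
    f1 (n + 1) = p / (f0 n * f1 n) * ((1 + a0 * q ^ n * f0 n) / (a0 * q ^ n + f0 n)) ∧
    f0 (n - 1) = p / (f0 n * f1 n) * ((a1 * q ^ (ν - n) + f1 n) / (1 + a1 * q ^ (ν - n) * f1 n))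

/-- The `N×N` determinant `φ_ν^N(n) = det(H_{ν+i−1}(n+j−1))_{1 ≤ i,j ≤ N}`
(with `φ_ν^0(n) = 1`). -/
noncomputable def phiDet (H : ℤ → ℤ → ℂ) (N : ℕ) (ν n : ℤ) : ℂ :=
  (Matrix.of fun i j : Fin N => H (ν + (i.val : ℤ)) (n + (j.val : ℤ))).det

open Matrix in
theorem plucker_aux {ι : Type*} [Fintype ι] [DecidableEq ι] (M : Matrix ι ι ℂ) (i j : ι) (hij : i ≠ j)
    (p r : ι → ℂ) (h : ((M.updateRow i p).updateRow j r).det ≠ 0) :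
    ∃ α β : (ι → ℂ) → ℂ, ∀ a b, ((M.updateRow i a).updateRow j b).det = (α a * β b - β a * α b) *
      ((M.updateRow i p).updateRow j r).det := by
  set M0 := (M.updateRow i p).updateRow j r with hM0
  have hu : IsUnit M0.det := isUnit_iff_ne_zero.mpr h
  -- coordinates
  have hco : ∀ a : ι → ℂ, a = ∑ k, (a ᵥ* M0⁻¹) k • M0 k := by
    intro a
    have : (a ᵥ* M0⁻¹) ᵥ* M0 = a := by
      rw [Matrix.vecMul_vecMul, Matrix.nonsing_inv_mul _ hu, Matrix.vecMul_one]
    conv_lhs => rw [← this]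
    ext l
    simp [Matrix.vecMul, dotProduct]
  have h2 : ∀ b, ((M.updateRow i p).updateRow j b).det = (b ᵥ* M0⁻¹) j * M0.det := by
    intro b
    conv_lhs => rw [hco b]
    have : ((M.updateRow i p).updateRow j (∑ k, (b ᵥ* M0⁻¹) k • M0 k))
        = M0.updateRow j (∑ k, (b ᵥ* M0⁻¹) k • M0 k) := by
      rw [hM0]; ext x y; simp [Matrix.updateRow_apply]; split_ifs <;> rfl
    rw [this, Matrix.det_updateRow_sum]
    simp
  have h3 : ∀ b, ((M.updateRow i r).updateRow j b).det = -((b ᵥ* M0⁻¹) i * M0.det) := by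
    intro b
    have e : (M.updateRow i r).updateRow j b = ((M0.updateRow i b).submatrix (Equiv.swap i j) id) := by
      ext x y
      simp only [Matrix.submatrix_apply, Matrix.updateRow_apply, hM0, id]
      by_cases hxj : x = j
      · subst hxj; simp
      · by_cases hxi : x = i
        · subst hxi; simp [hij, hij.symm]
        · rw [Equiv.swap_apply_of_ne_of_ne hxi hxj]; simp [hxi, hxj]
    rw [e, Matrix.det_permute]
    conv_lhs => rw [hco b]
    rw [Matrix.det_updateRow_sum]
    simp [Equiv.Perm.sign_swap hij]
  refine ⟨fun a => (a ᵥ* M0⁻¹) i, fun a => (a ᵥ* M0⁻¹) j, fun a b => ?_⟩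
  have e : (M.updateRow i a).updateRow j b = (M0.updateRow j b).updateRow i a := by
    rw [Matrix.updateRow_comm _ hij.symm]
    ext x y; simp [Matrix.updateRow_apply, hM0]; split_ifs <;> rfl
  have e2 : ∀ c, (M0.updateRow j b).updateRow i c = (M.updateRow i c).updateRow j b := by
    intro c
    rw [Matrix.updateRow_comm _ hij.symm]
    ext x y; simp [Matrix.updateRow_apply, hM0]; split_ifs <;> rfl
  have key : ((M0.updateRow j b).updateRow i a).det
     = ∑ k, (a ᵥ* M0⁻¹) k * ((M0.updateRow j b).updateRow i (M0 k)).det := by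
    conv_lhs => rw [hco a]
    have : ∀ (A : Matrix ι ι ℂ) (c : ι → ℂ) (v : ι → ι → ℂ), (A.updateRow i (∑ k, c k • v k)).det
       = ∑ k, c k * (A.updateRow i (v k)).det := by
      intro A c v
      have := (Matrix.detRowAlternating (R := ℂ) (n := ι)).toMultilinearMap.map_update_sum
        (t := Finset.univ) (i := i) (g := fun k => c k • v k) (m := A)
      refine Eq.trans this (Finset.sum_congr rfl fun k _ => ?_)
      exact Matrix.det_updateRow_smul A i (c k) (v k)
    exact this _ _ _
  rw [e, key, Finset.sum_eq_add i j hij]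
  · rw [e2, e2]
    have a1 : M0 i = p := by ext l; simp [hM0, Matrix.updateRow_apply, hij]
    have a2 : M0 j = r := by ext l; simp [hM0, Matrix.updateRow_apply]
    rw [a1, a2, h2, h3]; ring
  · intro k _ hk
    have : ((M0.updateRow j b).updateRow i (M0 k)).det = 0 := by
      apply Matrix.det_zero_of_row_eq (i := i) (j := k) hk.1.symm
      ext l; simp [Matrix.updateRow_apply, hk.1, hk.2]
    rw [this, mul_zero]
  · simp
  · simp

theorem plucker {ι : Type*} [Fintype ι] [DecidableEq ι] (M : Matrix ι ι ℂ) (i j : ι) (hij : i ≠ j)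
    (w : (ι → ℂ) → (ι → ℂ) → ℂ) (hw : ∀ a b, w a b = ((M.updateRow i a).updateRow j b).det) :
    (∀ a b, w a b = - w b a) ∧ ∀ a b c d, w a b * w c d - w a c * w b d + w a d * w b c = 0 := by
  by_cases h : ∃ p r, w p r ≠ 0
  · obtain ⟨p, r, h⟩ := h
    rw [hw] at h
    obtain ⟨α, β, hh⟩ := plucker_aux M i j hij p r h
    have hw2 : ∀ a b, w a b = (α a * β b - β a * α b) *
      ((M.updateRow i p).updateRow j r).det := fun a b => by rw [hw, hh]
    generalize ((M.updateRow i p).updateRow j r).det = D at hw2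
    simp only [hw2]
    exact ⟨fun a b => by ring, fun a b c d => by ring⟩
  · push Not at h
    exact ⟨fun a b => by rw [h a b, h b a, neg_zero], fun a b c d => by rw [h a b, h a c, h a d]; ring⟩

theorem pre_det (N : ℕ) (y x : ℕ → Fin (N+1) → ℂ) (K : ℕ → ℂ)
    (h : ∀ i j, y (i+1) j = y i j - K i * x i j) :
    (Matrix.of fun (i : Fin (N+1)) j => y i j).det = (∏ i ∈ Finset.range N, (-K i)) *
      (Matrix.of fun (i : Fin (N+1)) j => if (i:ℕ) = 0 then y 0 j else x (i-1) j).det := by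
  have := Matrix.det_mul_column (fun i : Fin (N+1) => if (i:ℕ) = 0 then (1:ℂ) else -K (i-1))
    (Matrix.of fun (i : Fin (N+1)) j => if (i:ℕ) = 0 then y 0 j else x (i-1) j)
  rw [Fin.prod_univ_succ] at this
  simp only [Fin.val_zero, Fin.val_succ] at this
  rw [Finset.prod_range]
  simp only [if_true, one_mul, Nat.succ_ne_zero, if_false, Nat.add_sub_cancel] at this
  rw [← this]
  apply Matrix.det_eq_of_forall_row_eq_smul_add_pred (fun _ => 1)
  · intro j; simp
  · intro i j; simp [h]; ring

theorem suf_det (N : ℕ) (y x : ℕ → Fin (N+1) → ℂ) (K : ℕ → ℂ)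
    (h : ∀ i j, y (i+1) j = y i j - K i * x i j) :
    (Matrix.of fun (i : Fin (N+1)) j => y i j).det = (∏ i ∈ Finset.range N, (K i)) *
      (Matrix.of fun (i : Fin (N+1)) j => if (i:ℕ) = N then y N j else x i j).det := by
  have := Matrix.det_mul_column (fun i : Fin (N+1) => if (i:ℕ) = N then (1:ℂ) else K i)
    (Matrix.of fun (i : Fin (N+1)) j => if (i:ℕ) = N then y N j else x i j)
  rw [Fin.prod_univ_castSucc] at this
  simp only [Fin.val_last, Fin.val_castSucc] at this
  rw [Finset.prod_range]
  have e : ∀ i : Fin N, (i:ℕ) ≠ N := fun i => i.2.ne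
  simp only [e, if_false, if_true, mul_one] at this
  rw [← this, ← Matrix.det_submatrix_equiv_self Fin.revPerm, ← Matrix.det_submatrix_equiv_self Fin.revPerm (Matrix.of _)]
  apply Matrix.det_eq_of_forall_row_eq_smul_add_pred (fun _ => 1)
  · intro j; simp
  · intro i j
    have h1 : N - ((i:ℕ)+1) + 1 = N - i := by omega
    have h2 := h (N - ((i:ℕ)+1)) j.rev
    rw [h1] at h2
    have h3 : N - ((i:ℕ)+1) ≠ N := by omega
    simp [Fin.val_rev, h3, h2]

noncomputable def skipDet (H : ℤ → ℤ → ℂ) (N : ℕ) (m n : ℤ) : ℂ :=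
  (Matrix.of fun i j : Fin N => H (m + (i.val : ℤ))
    (n + (if j.val + 1 = N then (N : ℤ) else (j.val : ℤ)))).det

theorem row_ids (H : ℤ → ℤ → ℂ) (K : ℤ → ℂ) (hK : ∀ m, K m ≠ 0)
    (hH : ∀ m n, H (m + 1) n - H m n = - K m * H m (n - 1)) (k : ℕ) (m n : ℤ) :
    -- C
    (phiDet H (k+2) m n * phiDet H (k+1) (m+1) (n+1)
      - phiDet H (k+2) m (n+1) * phiDet H (k+1) (m+1) n / K m
      + phiDet H (k+2) (m+1) (n+1) * phiDet H (k+1) m n / K (m+k+1) = 0) ∧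
    -- B
    (phiDet H (k+2) m n * phiDet H (k+1) (m+1) (n+2)
      - phiDet H (k+2) m (n+1) * phiDet H (k+1) (m+1) (n+1) / K m
      + phiDet H (k+2) (m+1) (n+1) * phiDet H (k+1) m (n+1) / K (m+k+1) = 0) ∧
    -- GY
    (phiDet H (k+2) m (n+1) * phiDet H k (m+1) (n+1) / K m
      + phiDet H (k+1) (m+1) (n+1) * phiDet H (k+1) m (n+1)
      - phiDet H (k+1) m n * phiDet H (k+1) (m+1) (n+2) = 0) ∧
    -- FY
    (phiDet H (k+2) (m+1) (n+1) * phiDet H k (m+1) (n+1) / K (m+k+1)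
      + phiDet H (k+1) (m+1) (n+1) * phiDet H (k+1) (m+1) (n+1)
      - phiDet H (k+1) (m+1) n * phiDet H (k+1) (m+1) (n+2) = 0) ∧
    -- a
    (phiDet H (k+2) m n * phiDet H k (m+1) n
      = phiDet H (k+1) m n * skipDet H (k+1) (m+1) n - phiDet H (k+1) (m+1) n * skipDet H (k+1) m n) ∧
    -- c
    (phiDet H (k+2) (m+1) (n+1) * phiDet H k (m+1) n / K (m+k+1)
      = skipDet H (k+1) (m+1) (n+1) * phiDet H (k+1) (m+1) n
        - phiDet H (k+1) (m+1) (n+1) * skipDet H (k+1) (m+1) n) := by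
  set M : Matrix (Fin (k+2)) (Fin (k+2)) ℂ := Matrix.of fun i j => H (m + (i.val:ℤ)) (n + (j.val:ℤ)) with hM
  have hne : (0 : Fin (k+2)) ≠ Fin.last (k+1) := by
    intro h; have := congrArg Fin.val h; simp at this
  obtain ⟨w, hw⟩ : ∃ w : (Fin (k+2) → ℂ) → (Fin (k+2) → ℂ) → ℂ,
    ∀ a b, w a b = ((M.updateRow 0 a).updateRow (Fin.last (k+1)) b).det := ⟨_, fun _ _ => rfl⟩
  obtain ⟨anti, pl⟩ := plucker M 0 (Fin.last (k+1)) hne w hw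
  let x : ℕ → Fin (k+2) → ℂ := fun i j => H (m + (i:ℤ)) (n + (j.val:ℤ))
  let y : ℕ → Fin (k+2) → ℂ := fun i j => H (m + (i:ℤ)) (n + 1 + (j.val:ℤ))
  let e : Fin (k+2) → Fin (k+2) → ℂ := fun c => Pi.single c 1
  set P : ℂ := ∏ i ∈ Finset.range k, (-K (m + 1 + (i:ℤ))) with hP
  have hP0 : P ≠ 0 := Finset.prod_ne_zero_iff.mpr fun i _ => neg_ne_zero.mpr (hK _)
  have hyx : ∀ i j, y (i+1) j = y i j - K (m + i) * x i j := by
    intro i j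
    have := hH (m+i) (n + 1 + (j.val:ℤ))
    have e1 : n + 1 + (j.val:ℤ) - 1 = n + j.val := by ring
    rw [e1] at this
    simp only [x, y]
    push_cast
    rw [← add_assoc]
    linear_combination this
  have w_x0xN : w (x 0) (x (k+1)) = phiDet H (k+2) m n := by
    rw [hw, phiDet]
    congr 1
    ext i j
    simp only [Matrix.updateRow_apply, x, hM, Matrix.of_apply]
    split_ifs with h1 h2
    · subst h1; simp
    · subst h2; simp
    · rfl
  have w_yxN : phiDet H (k+2) (m+1) (n+1) = P * (-K (m+k+1)) * w (y 1) (x (k+1)) := by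
    have := pre_det (k+1) (fun i => y (i+1)) (fun i => x (i+1)) (fun i => K (m + (i+1:ℕ))) (fun i j => hyx (i+1) j)
    rw [Finset.prod_range_succ] at this
    have e1 : phiDet H (k+2) (m+1) (n+1) = (Matrix.of fun (i : Fin (k+1+1)) j => y (i+1) j).det := by
      rw [phiDet]; congr 1; ext i j; simp only [Matrix.of_apply, y]; push_cast; congr 1; ring
    rw [e1, this, hw, hP]
    congr 1
    · congr 1
      · refine Finset.prod_congr rfl fun i _ => ?_
        push_cast; congr 2; ring
      · push_cast; congr 2; ring
    · congr 1
      ext i j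
      simp only [Matrix.updateRow_apply, hM, Matrix.of_apply]
      by_cases h1 : i = Fin.last (k+1)
      · subst h1; simp [x]
      · by_cases h0 : i = 0
        · subst h0; simp [h1]
        · have h0' : (i:ℕ) ≠ 0 := fun h => h0 (Fin.ext h)
          simp only [h0', h1, h0, if_false, x]
          congr 3; omega
  have w_x0y : phiDet H (k+2) m (n+1) = K m * (-1)^k * P * w (x 0) (y 1) := by
    have := suf_det (k+1) y x (fun i => K (m + i)) hyx
    have e1 : phiDet H (k+2) m (n+1) = (Matrix.of fun (i : Fin (k+1+1)) j => y i j).det := by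
      rw [phiDet]
    have e2 : w (x 0) (y (k+1)) = (Matrix.of fun (i : Fin (k+1+1)) j => if (i:ℕ) = k+1 then y (k+1) j else x i j).det := by
      rw [hw]; congr 1; ext i j
      simp only [Matrix.updateRow_apply, hM, Matrix.of_apply]
      by_cases h1 : i = Fin.last (k+1)
      · subst h1; simp
      · have h1' : (i:ℕ) ≠ k+1 := fun h => h1 (Fin.ext h)
        by_cases h0 : i = 0
        · subst h0; simp [h1]
        · simp [h0, h1, h1', x]
    have e3 : ∀ l, l ≤ k → w (x 0) (y (l+1)) = w (x 0) (y 1) := by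
      intro l
      induction l with
      | zero => intro _; rfl
      | succ l ih =>
        intro hl
        rw [← ih (by omega)]
        have e4 : y (l+1+1) = y (l+1) + (-K (m + (l+1:ℕ))) • x (l+1) := by
          ext j; rw [hyx]; simp; ring
        rw [e4, hw, hw, Matrix.det_updateRow_add, Matrix.det_updateRow_smul]
        have : ((M.updateRow 0 (x 0)).updateRow (Fin.last (k+1)) (x (l+1))).det = 0 := by
          apply Matrix.det_zero_of_row_eq (i := Fin.last (k+1)) (j := ⟨l+1, by omega⟩)
          · intro h; have := congrArg Fin.val h; simp at this; omega
          · have h1 : (⟨l+1, by omega⟩ : Fin (k+2)) ≠ Fin.last (k+1) := by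
              intro h; have := congrArg Fin.val h; simp at this; omega
            have h2 : (⟨l+1, by omega⟩ : Fin (k+2)) ≠ 0 := by
              intro h; have := congrArg Fin.val h; simp at this
            ext j
            simp [Matrix.updateRow_apply, h1, h2, hM, x]
        rw [this]; ring
    rw [e1, this, ← e2, e3 k le_rfl, Finset.prod_range_succ']
    congr 1
    have : ∏ i ∈ Finset.range k, K (m + ((i+1:ℕ):ℤ)) = (-1)^k * P := by
      rw [hP, Finset.prod_neg, ← mul_assoc, Finset.card_range, ← mul_pow]
      simp
      refine Finset.prod_congr rfl fun i _ => ?_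
      congr 1; ring
    rw [this]; simp; ring
  have w_e : ∀ a c, w a (e c) = (-1)^(k+1+c.val) *
      ((M.updateRow 0 a).submatrix Fin.castSucc c.succAbove).det := by
    intro a c
    rw [hw, ← Matrix.adjugate_apply, Matrix.adjugate_fin_succ_eq_det_submatrix]
    simp
  have w_ex : ∀ c, w (x (k+1)) (e c) = - ((-1)^(c.val) *
      (M.submatrix Fin.succ c.succAbove).det) := by
    intro c
    rw [anti, hw, Matrix.updateRow_comm _ hne, ← Matrix.adjugate_apply, Matrix.adjugate_fin_succ_eq_det_submatrix]
    simp only [Fin.val_zero, zero_add]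
    congr 4
    ext i j
    simp only [Matrix.updateRow_apply]
    split_ifs with h
    · subst h; simp [x, hM]
    · rfl
  have w_x0e : ∀ c, w (x 0) (e c) = (-1)^(k+1+c.val) * (M.submatrix Fin.castSucc c.succAbove).det := by
    intro c
    rw [w_e]
    congr 3
    ext i j
    simp only [Matrix.updateRow_apply]
    split_ifs with h
    · subst h; simp [x, hM]
    · rfl
  have w_ye : ∀ c, (Matrix.of fun (i : Fin (k+1)) j => y (i+1) (c.succAbove j)).det
      = P * ((-1)^(k+1+c.val) * w (y 1) (e c)) := by
    intro c
    rw [w_e, ← mul_assoc ((-1)^(k+1+c.val)), ← mul_pow]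
    have := pre_det k (fun i j => y (i+1) (c.succAbove j)) (fun i j => x (i+1) (c.succAbove j))
      (fun i => K (m + (i+1:ℕ))) (fun i j => hyx (i+1) _)
    rw [this]
    simp only [mul_neg, mul_one, neg_neg, one_pow, one_mul]
    congr 1
    · rw [hP]
      refine Finset.prod_congr rfl fun i _ => ?_
      push_cast; congr 2; ring
    · congr 1
      ext i j
      simp only [Matrix.submatrix_apply, Matrix.updateRow_apply, hM, Matrix.of_apply]
      by_cases h0 : i = 0
      · subst h0; simp
      · have h0' : (i:ℕ) ≠ 0 := fun h => h0 (Fin.ext h)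
        have h0'' : Fin.castSucc i ≠ 0 := fun h => h0' (by simpa using congrArg Fin.val h)
        simp only [h0', h0'', if_false, x, Fin.val_castSucc]
        congr 3; omega
  have sA0 : ∀ j : Fin (k+1), (((0 : Fin (k+2)).succAbove j).val : ℤ) = j.val + 1 := by
    intro j; simp
  have sAN : ∀ j : Fin (k+1), (((Fin.last (k+1)).succAbove j).val : ℤ) = j.val := by
    intro j; simp
  have sAk : ∀ j : Fin (k+1), (((⟨k, by omega⟩ : Fin (k+2)).succAbove j).val : ℤ)
      = if j.val + 1 = k+1 then ((k+1:ℕ):ℤ) else j.val := by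
    intro j
    rw [Fin.succAbove]
    have := j.2
    split_ifs with h1 h2 h2
    · simp [Fin.lt_def] at h1; omega
    · simp
    · simp; omega
    · simp [Fin.lt_def] at h1; omega
  have hs : ∀ l : ℕ, ((-1:ℂ)^l) * (-1)^l = 1 := by
    intro l; rw [← mul_pow]; simp
  -- evaluations
  have x0e0 : w (x 0) (e 0) = (-1)^(k+1) * phiDet H (k+1) m (n+1) := by
    rw [w_x0e, phiDet, Fin.val_zero, add_zero]; congr 2
    ext i j; simp only [Matrix.submatrix_apply, hM, Matrix.of_apply, sA0, Fin.val_castSucc]; congr 1; ring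
  have x0eN : w (x 0) (e (Fin.last (k+1))) = phiDet H (k+1) m n := by
    rw [w_x0e, phiDet, Fin.val_last, pow_add, hs, one_mul]; congr 1
    ext i j; simp only [Matrix.submatrix_apply, hM, Matrix.of_apply, sAN, Fin.val_castSucc]
  have x0ek : w (x 0) (e ⟨k, by omega⟩) = - skipDet H (k+1) m n := by
    have h1 : ((-1:ℂ))^(k+1+k) = -1 := by rw [pow_add, pow_succ, mul_right_comm, hs, one_mul]
    rw [w_x0e, skipDet, h1, neg_one_mul]; congr 2
    ext i j; simp only [Matrix.submatrix_apply, hM, Matrix.of_apply, sAk, Fin.val_castSucc]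
  have xNe0 : w (x (k+1)) (e 0) = - phiDet H (k+1) (m+1) (n+1) := by
    rw [w_ex, phiDet, Fin.val_zero, pow_zero, one_mul]; congr 2
    ext i j; simp only [Matrix.submatrix_apply, hM, Matrix.of_apply, sA0, Fin.val_succ]; push_cast; congr 1 <;> ring
  have xNeN : w (x (k+1)) (e (Fin.last (k+1))) = - ((-1)^(k+1) * phiDet H (k+1) (m+1) n) := by
    rw [w_ex, phiDet, Fin.val_last]; congr 3
    ext i j; simp only [Matrix.submatrix_apply, hM, Matrix.of_apply, sAN, Fin.val_succ]; push_cast; congr 1; ring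
  have xNek : w (x (k+1)) (e ⟨k, by omega⟩) = (-1)^(k+1) * skipDet H (k+1) (m+1) n := by
    rw [w_ex, skipDet, pow_succ, mul_neg_one, neg_mul]; congr 3
    ext i j; simp only [Matrix.submatrix_apply, hM, Matrix.of_apply, sAk, Fin.val_succ]; push_cast; congr 1; ring
  have ye0 : phiDet H (k+1) (m+1) (n+2) = P * ((-1)^(k+1) * w (y 1) (e 0)) := by
    have := w_ye 0
    rw [Fin.val_zero, add_zero] at this
    rw [← this, phiDet]; congr 1
    ext i j; simp only [Matrix.of_apply, y, sA0]; push_cast; congr 1 <;> ring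
  have yeN : phiDet H (k+1) (m+1) (n+1) = P * w (y 1) (e (Fin.last (k+1))) := by
    have := w_ye (Fin.last (k+1))
    rw [Fin.val_last, pow_add, hs, one_mul] at this
    rw [← this, phiDet]; congr 1
    ext i j; simp only [Matrix.of_apply, y, sAN]; push_cast; congr 1; ring
  have yek : skipDet H (k+1) (m+1) (n+1) = - (P * w (y 1) (e ⟨k, by omega⟩)) := by
    have := w_ye ⟨k, by omega⟩
    have h1 : ((-1:ℂ))^(k+1+k) = -1 := by rw [pow_add, pow_succ, mul_right_comm, hs, one_mul]
    rw [h1, neg_one_mul, mul_neg] at this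
    rw [← this, skipDet]; congr 1
    ext i j; simp only [Matrix.of_apply, y, sAk]; push_cast; congr 1; ring
  have w_ee : ∀ c : Fin (k+1), w (e c.castSucc) (e (Fin.last (k+1)))
      = (-1)^(c.val) * (Matrix.of fun i j : Fin k => H (m + 1 + i.val) (n + (c.succAbove j).val)).det := by
    intro c
    rw [w_e, Fin.val_last, pow_add, hs, one_mul]
    have : (M.updateRow 0 (e c.castSucc)).submatrix Fin.castSucc (Fin.last (k+1)).succAbove
       = (M.submatrix Fin.castSucc Fin.castSucc).updateRow 0 (Pi.single c 1) := by
      ext i j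
      simp only [Matrix.submatrix_apply, Matrix.updateRow_apply, Fin.succAbove_last]
      by_cases h : i = 0
      · subst h; simp [e, Pi.single_apply]
      · have h0'' : Fin.castSucc i ≠ 0 := fun h' => h (Fin.ext (by simpa using congrArg Fin.val h'))
        simp [h]
    rw [this, ← Matrix.adjugate_apply, Matrix.adjugate_fin_succ_eq_det_submatrix]
    simp only [Fin.val_zero, zero_add]
    congr 2
    ext i j
    simp [hM]
    congr 1; ring
  have e0eN : w (e 0) (e (Fin.last (k+1))) = phiDet H k (m+1) (n+1) := by
    have := w_ee 0
    simp only [Fin.castSucc_zero] at this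
    rw [this, phiDet, Fin.val_zero, pow_zero, one_mul]; congr 1
    ext i j; simp; congr 1; ring
  have ekeN : w (e ⟨k, by omega⟩) (e (Fin.last (k+1))) = (-1)^k * phiDet H k (m+1) n := by
    have := w_ee (Fin.last k)
    rw [show (Fin.last k).castSucc = (⟨k, by omega⟩ : Fin (k+2)) from rfl] at this
    rw [this, phiDet, Fin.val_last]; congr 2
    ext i j; simp
  have hKm := hK m
  have hKN := hK (m+k+1)
  have pC := pl (x 0) (x (k+1)) (y 1) (e (Fin.last (k+1)))
  have pB := pl (x 0) (x (k+1)) (y 1) (e 0)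
  have pGY := pl (x 0) (y 1) (e 0) (e (Fin.last (k+1)))
  have pFY := pl (y 1) (x (k+1)) (e 0) (e (Fin.last (k+1)))
  have pa := pl (x 0) (x (k+1)) (e ⟨k, by omega⟩) (e (Fin.last (k+1)))
  have pc := pl (y 1) (x (k+1)) (e ⟨k, by omega⟩) (e (Fin.last (k+1)))
  rw [anti (x (k+1)) (y 1)] at pC pB
  have hsk := hs k
  have hsk1 : ((-1:ℂ))^(k+1) = - (-1)^k := by rw [pow_succ]; ring
  rw [hsk1] at ye0 x0e0 xNeN xNek
  clear hsk1 hs w_ee w_ye w_x0e w_ex w_e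
  generalize ((-1:ℂ))^k = s at *
  have hs2 : s ≠ 0 := by rintro rfl; simp at hsk
  have v1 : w (y 1) (x (k+1)) = phiDet H (k+2) (m+1) (n+1) / (P * (-K (m+k+1))) := by
    rw [w_yxN]; field_simp
  have v2 : w (x 0) (y 1) = phiDet H (k+2) m (n+1) * s / (K m * P) := by
    rw [w_x0y]; field_simp; linear_combination (- w (x 0) (y 1)) * hsk
  have v3 : w (y 1) (e 0) = -s * phiDet H (k+1) (m+1) (n+2) / P := by
    rw [ye0]; field_simp; linear_combination (- w (y 1) (e 0)) * hsk
  have v4 : w (y 1) (e (Fin.last (k+1))) = phiDet H (k+1) (m+1) (n+1) / P := by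
    rw [yeN]; field_simp
  have v5 : w (y 1) (e ⟨k, by omega⟩) = - skipDet H (k+1) (m+1) (n+1) / P := by
    rw [yek]; field_simp
  simp only [w_x0xN, v1, v2, v3, v4, v5, x0e0, x0eN, x0ek, xNe0, xNeN, xNek, e0eN, ekeN] at pC pB pGY pFY pa pc
  clear v1 v2 v3 v4 v5 x0e0 x0eN x0ek xNe0 xNeN xNek e0eN ekeN w_x0y w_yxN w_x0xN ye0 yeN yek pl anti hw
  have hPi := inv_ne_zero hP0
  refine ⟨?_, ?_, ?_, ?_, ?_, ?_⟩
  · refine (mul_eq_zero.mp (?_ : P⁻¹ * _ = 0)).resolve_left hPi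
    linear_combination pC + phiDet H (k+2) m (n+1) * phiDet H (k+1) (m+1) n / (K m * P) * hsk
  · refine (mul_eq_zero.mp (?_ : (s * P⁻¹) * _ = 0)).resolve_left (mul_ne_zero hs2 hPi)
    linear_combination -pB
  · refine (mul_eq_zero.mp (?_ : (s * P⁻¹) * _ = 0)).resolve_left (mul_ne_zero hs2 hPi)
    linear_combination pGY
  · refine (mul_eq_zero.mp (?_ : P⁻¹ * _ = 0)).resolve_left hPi
    linear_combination -pFY + phiDet H (k+1) (m+1) n * phiDet H (k+1) (m+1) (n+2) / P * hsk
  · refine mul_left_cancel₀ hs2 ?_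
    linear_combination pa
  · refine mul_left_cancel₀ (mul_ne_zero hs2 hPi) ?_
    linear_combination -pc

theorem trace_id (H : ℤ → ℤ → ℂ) (K c : ℤ → ℂ)
    (hH : ∀ m n, K m * H m n - c n * H m n = H m (n + 1) - H (m + 1) n) (k : ℕ) (m n : ℤ) :
    skipDet H (k+1) m n - skipDet (fun a b => H b a) (k+1) n m
      = phiDet H (k+1) m n * (∑ i ∈ Finset.range (k+1), K (m + i) - ∑ j ∈ Finset.range (k+1), c (n + j)) := by
  set W : Matrix (Fin (k+1)) (Fin (k+1)) ℂ := Matrix.of fun i j => H (m + (i.val:ℤ)) (n + (j.val:ℤ)) with hW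
  have hdet : phiDet H (k+1) m n = W.det := rfl
  -- columns
  have hcol : ∑ j, (W.updateCol j (fun i => H (m + (i.val:ℤ)) (n + j.val + 1))).det = skipDet H (k+1) m n := by
    rw [Finset.sum_eq_single (Fin.last k)]
    · rw [skipDet]; congr 1
      ext i j
      simp only [Matrix.updateCol_apply, hW, Matrix.of_apply]
      by_cases h : j = Fin.last k
      · subst h; simp; congr 1; ring
      · have h' : j.val ≠ k := fun h' => h (Fin.ext h')
        simp [h, h']
    · intro j _ hj
      have hj' : j.val < k := by
        have := j.2
        have h' : j.val ≠ k := fun h' => hj (Fin.ext h')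
        omega
      have hne : j ≠ ⟨j.val+1, by omega⟩ := by
        intro h; have := congrArg Fin.val h; simp at this
      apply Matrix.det_zero_of_column_eq hne
      intro i
      simp only [Matrix.updateCol_apply, hne.symm, if_true, if_false, hW, Matrix.of_apply]
      push_cast; congr 1; ring
    · simp
  have hrow : ∑ i, (W.updateRow i (fun j => H (m + i.val + 1) (n + (j.val:ℤ)))).det
      = skipDet (fun a b => H b a) (k+1) n m := by
    rw [Finset.sum_eq_single (Fin.last k)]
    · rw [skipDet, ← Matrix.det_transpose]; congr 1
      ext j i
      simp only [Matrix.transpose_apply, Matrix.updateRow_apply, hW, Matrix.of_apply]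
      by_cases h : i = Fin.last k
      · subst h; simp; congr 1; ring
      · have h' : i.val ≠ k := fun h' => h (Fin.ext h')
        simp [h, h']
    · intro j _ hj
      have hj' : j.val < k := by
        have := j.2
        have h' : j.val ≠ k := fun h' => hj (Fin.ext h')
        omega
      have hne : j ≠ ⟨j.val+1, by omega⟩ := by
        intro h; have := congrArg Fin.val h; simp at this
      apply Matrix.det_zero_of_row_eq hne
      ext i
      simp only [Matrix.updateRow_apply, hne.symm, if_true, if_false, hW, Matrix.of_apply]
      push_cast; congr 1; ring
    · simp
  have ec : ∀ j (v : Fin (k+1) → ℂ), (W.updateCol j v).det = ∑ i, W.adjugate j i * v i := by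
    intro j v
    rw [← Matrix.cramer_apply, Matrix.cramer_eq_adjugate_mulVec]; rfl
  have er : ∀ i (v : Fin (k+1) → ℂ), (W.updateRow i v).det = ∑ j, W.adjugate j i * v j := by
    intro i v
    rw [← Matrix.cramer_transpose_apply, Matrix.cramer_eq_adjugate_mulVec, ← Matrix.adjugate_transpose]; rfl
  have s1 : ∀ i, ∑ j, W.adjugate j i * W i j = W.det := by
    intro i
    have := congrFun (congrFun (Matrix.mul_adjugate W) i) i
    rw [Matrix.mul_apply] at this
    simp only [mul_comm (W.adjugate _ _)]
    rw [this]; simp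
  have s2 : ∀ j, ∑ i, W.adjugate j i * W i j = W.det := by
    intro j
    have := congrFun (congrFun (Matrix.adjugate_mul W) j) j
    rw [Matrix.mul_apply] at this
    rw [this]; simp
  rw [← hcol, ← hrow, hdet, Finset.sum_range, Finset.sum_range, mul_sub, Finset.mul_sum, Finset.mul_sum]
  simp only [ec, er]
  have t1 : ∑ i : Fin (k+1), W.det * K (m + (i.val:ℤ)) = ∑ i : Fin (k+1), ∑ j, W.adjugate j i * (K (m + (i.val:ℤ)) * W i j) := by
    refine Finset.sum_congr rfl fun i _ => ?_
    rw [← s1 i, Finset.sum_mul]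
    refine Finset.sum_congr rfl fun j _ => by ring
  have t2 : ∑ j : Fin (k+1), W.det * c (n + (j.val:ℤ)) = ∑ i : Fin (k+1), ∑ j, W.adjugate j i * (c (n + (j.val:ℤ)) * W i j) := by
    rw [Finset.sum_comm]
    refine Finset.sum_congr rfl fun i _ => ?_
    rw [← s2 i, Finset.sum_mul]
    refine Finset.sum_congr rfl fun j _ => by ring
  rw [t1, t2, Finset.sum_comm, ← Finset.sum_sub_distrib, ← Finset.sum_sub_distrib]
  refine Finset.sum_congr rfl fun i _ => ?_
  rw [← Finset.sum_sub_distrib, ← Finset.sum_sub_distrib]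
  refine Finset.sum_congr rfl fun j _ => ?_
  have := hH (m + (i.val:ℤ)) (n + (j.val:ℤ))
  simp only [hW, Matrix.of_apply]
  linear_combination (-(Matrix.adjugate (Matrix.of fun (i j : Fin (k+1)) => H (m + (i.val:ℤ)) (n + (j.val:ℤ))) j i)) * this

theorem phiDet_swap (H : ℤ → ℤ → ℂ) (N : ℕ) (m n : ℤ) :
    phiDet (fun a b => H b a) N n m = phiDet H N m n := by
  rw [phiDet, phiDet, ← Matrix.det_transpose]; rfl

theorem phiDet_zero' (H : ℤ → ℤ → ℂ) (m n : ℤ) : phiDet H 0 m n = 1 := by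
  simp [phiDet]

theorem phiDet_one' (H : ℤ → ℤ → ℂ) (m n : ℤ) : phiDet H 1 m n = H m n := by
  simp [phiDet]

/-- The four bilinear relations; `m` plays the role of `ν - 1`. -/
theorem bilinear (H : ℤ → ℤ → ℂ) (K c : ℤ → ℂ) (Q : ℂ) (hK : ∀ m, K m ≠ 0) (hc : ∀ n, c n ≠ 0)
    (hKQ : ∀ m, K (m+1) = Q * K m) (hcQ : ∀ m, c (m+1) = Q * c m)
    (h1 : ∀ m n, H m (n + 1) - H m n = - c n * H (m - 1) n)
    (h2 : ∀ m n, H (m + 1) n - H m n = - K m * H m (n - 1)) (N : ℕ) (m n : ℤ)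
    (hf : phiDet H N (m+1) n ≠ 0) (hg : phiDet H N m n ≠ 0) :
    (phiDet H (N+1) (m+1) n * phiDet H N m n - c (n+N) * phiDet H (N+1) m n * phiDet H N (m+1) n
      = phiDet H (N+1) (m+1) (n+1) * phiDet H N m (n-1) * c n / c (n+N)) ∧
    (phiDet H (N+1) (m+1) n * phiDet H N m n / K (m+N) - phiDet H (N+1) m n * phiDet H N (m+1) n / K m
      = - (phiDet H (N+1) m (n-1) * phiDet H N (m+1) (n+1))) ∧
    (phiDet H (N+1) m (n-1) * phiDet H N (m+1) n + phiDet H (N+1) (m+1) n * phiDet H N m (n-1) / K (m+N)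
      = phiDet H (N+1) m n * phiDet H N (m+1) (n-1) / K m) ∧
    (phiDet H (N+1) m (n-1) * phiDet H N (m+1) n + phiDet H (N+1) (m+1) n * phiDet H N m (n-1) / c (n-1+N)
      = phiDet H (N+1) (m+1) (n-1) * phiDet H N m n / c (n-1)) := by
  rcases N with _ | k
  · have hKm := hK m
    have hcn := hc n
    have hcn1 := hc (n-1)
    have a1 := h1 (m+1) n
    have a2 := h2 m n
    have a3 := h1 (m+1) (n-1)
    rw [show m + 1 - 1 = m by ring] at a1 a3
    rw [show n - 1 + 1 = n by ring] at a3
    simp only [phiDet_zero', zero_add, phiDet_one', Nat.cast_zero, add_zero]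
    refine ⟨?_, ?_, ?_, ?_⟩
    · field_simp; linear_combination -a1
    · field_simp; linear_combination a2
    · field_simp; linear_combination a2
    · field_simp; linear_combination a3
  · obtain ⟨C, B, GY, -, -, -⟩ := row_ids H K hK h2 k m (n-1)
    obtain ⟨-, -, -, FY, -, -⟩ := row_ids H K hK h2 k (m-1) (n-1)
    obtain ⟨-, -, -, -, a, -⟩ := row_ids H K hK h2 k m n
    have h1' : ∀ p r, (fun a b => H b a) (p+1) r - (fun a b => H b a) p r
      = - c p * (fun a b => H b a) p (r-1) := fun p r => h1 r p
    obtain ⟨D, -, -, -, -, -⟩ := row_ids (fun a b => H b a) c hc h1' k (n-1) m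
    obtain ⟨D', -, -, -, -, -⟩ := row_ids (fun a b => H b a) c hc h1' k n m
    obtain ⟨-, -, -, -, -, cT⟩ := row_ids (fun a b => H b a) c hc h1' k (n-1) m
    simp only [phiDet_swap] at D D' cT
    have hT : ∀ m n, K m * H m n - c n * H m n = H m (n + 1) - H (m + 1) n := by
      intro m n
      have b1 := h2 m (n+1)
      have b2 := h1 (m+1) n
      rw [show n + 1 - 1 = n by ring] at b1
      rw [show m + 1 - 1 = m by ring] at b2
      linear_combination b1 - b2
    have d0 := trace_id H K c hT k m n
    have d1 := trace_id H K c hT k (m+1) n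
    have geoK : K (m + (k+1:ℕ)) = Q^(k+1) * K m ∧ K (m+k) = Q^k * K m ∧ c (n + (k+1:ℕ)) = Q^(k+1) * c n
        ∧ c (n+k) = Q^k * c n := by
      have gk : ∀ l : ℕ, K (m + l) = Q^l * K m := by
        intro l
        induction l with
        | zero => simp
        | succ l ih => push_cast; rw [← add_assoc, hKQ, ih]; ring
      have gc : ∀ l : ℕ, c (n + l) = Q^l * c n := by
        intro l
        induction l with
        | zero => simp
        | succ l ih => push_cast; rw [← add_assoc, hcQ, ih]; ring
      exact ⟨gk _, gk _, gc _, gc _⟩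
    have tel : (∑ i ∈ Finset.range (k+1), K (m + 1 + i)) = (∑ i ∈ Finset.range (k+1), K (m + i))
        + K (m + (k+1:ℕ)) - K m := by
      have e1 := Finset.sum_range_succ (fun i : ℕ => K (m + i)) (k+1)
      have e2 := Finset.sum_range_succ' (fun i : ℕ => K (m + i)) (k+1)
      have e3 : (∑ i ∈ Finset.range (k+1), K (m + 1 + i)) = ∑ i ∈ Finset.range (k+1), K (m + (i+1:ℕ)) :=
        Finset.sum_congr rfl fun i _ => by push_cast; congr 1; ring
      simp only [Nat.cast_zero, add_zero] at e2
      rw [e3]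
      linear_combination e1 - e2
    rw [tel] at d1
    have i1 : n - 1 + 1 = n := by ring
    have i2 : n - 1 + 2 = n + 1 := by ring
    have i3 : m - 1 + 1 = m := by ring
    have i4 : m + (k:ℤ) + 1 = m + (k+1:ℕ) := by push_cast; ring
    have i5 : m - 1 + (k:ℤ) + 1 = m + k := by ring
    have i6 : n + (k:ℤ) + 1 = n + (k+1:ℕ) := by push_cast; ring
    have i7 : n - 1 + (k:ℤ) + 1 = n + k := by ring
    have i8 : n - 1 + ((k+1:ℕ):ℤ) = n + k := by push_cast; ring
    simp only [i1, i2, i3, i4, i5, i6, i7, i8] at C B GY FY a D D' cT d0 d1 ⊢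
    obtain ⟨g1, g2, g3, g4⟩ := geoK
    have nz1 := hK (m + (k+1:ℕ))
    have nz2 := hK (m + k)
    have nz3 := hc (n + (k+1:ℕ))
    have nz4 := hc (n + k)
    have nz5 := hK m
    have nz6 := hc n
    have nz7 := hc (n-1)
    refine ⟨?_, ?_, ?_, ?_⟩
    · have hQk : Q^k ≠ 0 := by intro h; rw [h] at g2; simp at g2; exact nz2 g2
      have e1 : c n * (K m)⁻¹ * (c (n+k))⁻¹ = (K (m+k))⁻¹ := by rw [g2, g4]; field_simp
      have e2 : c n * K (m+(k+1:ℕ)) * (K m)⁻¹ = c (n+(k+1:ℕ)) := by rw [g1, g3]; field_simp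
      have hcc : c n * (c n)⁻¹ = 1 := mul_inv_cancel₀ nz6
      have hkk : K m * (K m)⁻¹ = 1 := mul_inv_cancel₀ nz5
      set F := phiDet H (k + 2) (m + 1) n
      set G := phiDet H (k + 2) m n
      set f := phiDet H (k + 1) (m + 1) n
      set g := phiDet H (k + 1) m n
      set gm := phiDet H (k + 1) m (n - 1)
      set gp := phiDet H (k + 1) m (n + 1)
      have Z : G * phiDet H k (m + 1) n - F * phiDet H k m n / c (n + k)
          = f * g * (K (m + (k+1:ℕ)) - K m) := by
        linear_combination a - cT + g * d1 - f * d0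
      refine mul_left_cancel₀ hg ?_
      change g * (F * g - c (n + (k+1:ℕ)) * G * f)
        = g * (phiDet H (k + 2) (m + 1) (n + 1) * gm * c n / c (n + (k+1:ℕ)))
      linear_combination F*FY - c n*G*GY + (c n*G/K m)*Z - gm*c n*D' - (gm*F*gp)*hcc - (c n*G*f*g)*hkk + F*G*phiDet H k m n*e1 + G*f*g*e2
    · linear_combination B
    · linear_combination C
    · linear_combination D

theorem final_alg (q a0 a1 A V L F G f g Fp gm Gm fp fm Fm : ℂ)
    (hq : q ≠ 0) (ha0 : a0 ≠ 0) (ha1 : a1 ≠ 0) (hA : A ≠ 0) (hV : V ≠ 0) (hL : L ≠ 0)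
    (hF : F ≠ 0) (hG : G ≠ 0) (hf : f ≠ 0) (hg : g ≠ 0) (hFp : Fp ≠ 0) (hgm : gm ≠ 0)
    (hGm : Gm ≠ 0) (hfp : fp ≠ 0) (hfm : fm ≠ 0) (hFm : Fm ≠ 0)
    (eA : F * g - a0^2 * (A*L)^2 * G * f = Fp * gm * (a0^2 * A^2) / (a0^2 * (A*L)^2))
    (eB : F * g / (a0^2 * a1^2 * (V/q*L)^2) - G * f / (a0^2 * a1^2 * (V/q)^2) = - (Gm * fp))
    (eC : Gm * f + F * gm / (a0^2 * a1^2 * (V/q*L)^2) = G * fm / (a0^2 * a1^2 * (V/q)^2))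
    (eD : Gm * f + F * gm / (a0^2 * (A/q*L)^2) = Fm * g / (a0^2 * (A/q)^2))
    (x y : ℂ) (hx : x = -(a0 * (A * L^2)) * (G * f) / (F * g))
    (hy : y = 1 / (a0^2 * a1 * (A * V * L^2 / q^2)) * ((F * gm) / (Gm * f))) :
    1 / (a0^2 * a1 * (A * q * V * L^2 / q^2)) * ((Fp * g) / (G * fp))
      = L^2 * q / (x * y) * ((1 + a0 * A * x) / (a0 * A + x)) ∧
    -(a0 * (A / q * L^2)) * (Gm * fm) / (Fm * gm)
      = L^2 * q / (x * y) * ((a1 * (V / A) + y) / (1 + a1 * (V / A) * y)) := by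
  have k1 : 1 + a0 * A * x = Fp * gm / (L^2 * (F * g)) := by
    rw [hx]; field_simp; field_simp at eA; linear_combination eA
  have k2 : a0 * A + x = - (a0 * A * (a0^2 * a1^2 * (V/q*L)^2) * Gm * fp / (F * g)) := by
    rw [hx]; field_simp; field_simp at eB; linear_combination eB
  have k3 : a1 * (V/A) + y = a1 * (V/A) * G * fm / (a0^2 * a1^2 * (V/q)^2 * Gm * f) := by
    rw [hy]; field_simp; field_simp at eC; linear_combination eC
  have k4 : 1 + a1 * (V/A) * y = Fm * g / (a0^2 * (A/q)^2 * Gm * f) := by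
    rw [hy]; field_simp; field_simp at eD; linear_combination eD
  rw [k1, k2, k3, k4, hx, hy]
  constructor
  · field_simp
  · field_simp

/-- determinant formula for the `q`-PIII specific solutions:
for every fixed `ν ∈ ℤ` and `N ∈ ℤ_{≥0}`,
`f₀(n) = −a₀q^{n+2N} φ_{ν−1}^{N+1}(n)φ_ν^N(n)/(φ_ν^{N+1}(n)φ_{ν−1}^N(n))` and
`f₁(n) = (1/(a₀²a₁q^{n+ν+2N−2})) φ_ν^{N+1}(n)φ_{ν−1}^N(n−1)/(φ_{ν−1}^{N+1}(n−1)φ_ν^N(n))`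
solve `qP3(ν, q^{2N+1})` (i.e. `c = 1`), provided all determinants occurring
are nonzero. -/
theorem qPIII_determinant_solution (q a0 a1 : ℂ)
    (hq : q ≠ 0) (ha0 : a0 ≠ 0) (ha1 : a1 ≠ 0)
    (H : ℤ → ℤ → ℂ)
    (hH1 : ∀ m n : ℤ, H m (n + 1) - H m n = -(a0 ^ 2 * q ^ (2 * n)) * H (m - 1) n)
    (hH2 : ∀ m n : ℤ, H (m + 1) n - H m n = -(a0 ^ 2 * a1 ^ 2 * q ^ (2 * m)) * H m (n - 1))
    (ν : ℤ) (N : ℕ)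
    -- all determinants occurring in the expressions are nonzero
    (hphi : ∀ n : ℤ, phiDet H N ν n ≠ 0 ∧ phiDet H (N + 1) ν n ≠ 0 ∧
      phiDet H N (ν - 1) n ≠ 0 ∧ phiDet H (N + 1) (ν - 1) n ≠ 0)
    (f0 f1 : ℤ → ℂ)
    (hf0 : ∀ n : ℤ, f0 n = -(a0 * q ^ (n + 2 * (N : ℤ))) *
      (phiDet H (N + 1) (ν - 1) n * phiDet H N ν n) /
      (phiDet H (N + 1) ν n * phiDet H N (ν - 1) n))
    (hf1 : ∀ n : ℤ, f1 n = 1 / (a0 ^ 2 * a1 * q ^ (n + ν + 2 * (N : ℤ) - 2)) *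
      ((phiDet H (N + 1) ν n * phiDet H N (ν - 1) (n - 1)) /
        (phiDet H (N + 1) (ν - 1) (n - 1) * phiDet H N ν n))) :
    qP3 q a0 a1 ν (q ^ (2 * (N : ℤ) + 1)) f0 f1 := by
  intro n
  have key := bilinear H (fun m => a0 ^ 2 * a1 ^ 2 * q ^ (2 * m)) (fun n => a0 ^ 2 * q ^ (2 * n)) (q^2)
    (fun m => mul_ne_zero (by positivity) (zpow_ne_zero _ hq))
    (fun m => mul_ne_zero (by positivity) (zpow_ne_zero _ hq))
    (fun m => by
      have : q ^ (2 * (m + 1)) = q^2 * q ^ (2 * m) := by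
        rw [mul_add, zpow_add₀ hq]; norm_cast; ring
      simp only [this]; ring)
    (fun m => by
      have : q ^ (2 * (m + 1)) = q^2 * q ^ (2 * m) := by
        rw [mul_add, zpow_add₀ hq]; norm_cast; ring
      simp only [this]; ring)
    hH1 hH2 N (ν - 1) n
    (by rw [sub_add_cancel]; exact (hphi n).1) (hphi n).2.2.1
  have sq : ∀ m : ℤ, q ^ (2 * m) = (q ^ m)^2 := fun m => by
    rw [mul_comm, zpow_mul]; norm_cast
  simp only [sub_add_cancel, sq, zpow_add₀ hq, zpow_sub₀ hq, zpow_one] at key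
  obtain ⟨eA, eB, eC, eD⟩ := key
  obtain ⟨n1, n2, n3, n4⟩ := hphi n
  obtain ⟨p1, p2, p3, p4⟩ := hphi (n+1)
  obtain ⟨m1, m2, m3, m4⟩ := hphi (n-1)
  have hx := hf0 n
  have hy := hf1 n
  have hx' := hf0 (n-1)
  have hy' := hf1 (n+1)
  have q2 : q ^ (2:ℤ) = q^2 := by norm_cast
  simp only [add_sub_cancel_right, sq, zpow_add₀ hq, zpow_sub₀ hq, zpow_one, q2] at hx hy hx' hy'
  rw [hy', hx']
  simp only [sq, zpow_add₀ hq, zpow_sub₀ hq, zpow_one]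
  exact final_alg q a0 a1 (q^n) (q^ν) (q^(N:ℤ)) _ _ _ _ _ _ _ _ _ _ hq ha0 ha1
    (zpow_ne_zero _ hq) (zpow_ne_zero _ hq) (zpow_ne_zero _ hq) n2 n4 n1 n3 p2 m3 m4 p1 m1 m2
    eA eB eC eD _ _ hx hy
end

section
/- Let q, a_0, a_1 be nonzero complex constants, let H : ℤ × ℤ → ℂ satisfy the contiguity relations H_ν(n+1) − H_ν(n) = −a_0² q^{2n}·H_{ν−1}(n) and H_{ν+1}(n) − H_ν(n) = −a_0² a_1² q^{2ν}·H_ν(n−1) for all ν, n ∈ ℤ, define φ_ν^{N}(n) = det( H_{ν+i−1}(n+j−1) )_{1 ≤ i,j ≤ N} (with φ_ν^{0}(n) = 1), and set f_0(n) = −a_0 q^{n+2N} · φ_{ν−1}^{N+1}(n) φ_ν^{N}(n) / ( φ_ν^{N+1}(n) φ_{ν−1}^{N}(n) ) and f_1(n) = (1/(a_0² a_1 q^{n+ν+2N−2})) · φ_ν^{N+1}(n) φ_{ν−1}^{N}(n−1) / ( φ_{ν−1}^{N+1}(n−1) φ_ν^{N}(n) ). Then, for all n, ν ∈ ℤ and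 N ∈ ℤ_{≥0} (with all determinants in denominators nonzero), the following multiplicative formulas hold: (i) 1 + a_0 q^n f_0(n) = q^{−2N} · φ_ν^{N+1}(n+1) φ_{ν−1}^{N}(n−1) / ( φ_ν^{N+1}(n) φ_{ν−1}^{N}(n) ); (ii) 1 + f_0(n)/(a_0 q^n) = −a_0² a_1² q^{2(ν+N−1)} · φ_{ν−1}^{N+1}(n−1) φ_ν^{N}(n+1) / ( φ_ν^{N+1}(n) φ_{ν−1}^{N}(n) ); (iii) 1 + a_1 q^{ν−n} f_1(n) = (1/(a_0² q^{2(n−1)})) · φ_ν^{N+1}(n−1) φ_{ν−1}^{N}(n) / ( φ_{ν−1}^{N+1}(n−1) φ_ν^{N}(n) ); (iv) 1 + f_1(n)/(a_1 q^{ν−n}) = (1/(a_0² a_1² q^{2(ν−1)})) · φ_{ν−1}^{N+1}(n) φ_ν^{N}(n−1) / ( φ_{ν−1}^{N+1}(n−1) φ_ν^{N}(n) ). -/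
namespace QP
open Matrix

theorem jac {n : Type*} [Fintype n] [DecidableEq n] (A : Matrix n n ℂ) (i j : n) (hij : i ≠ j) :
    A.det * ((A.updateCol j (Pi.single j 1)).updateCol i (Pi.single i 1)).det =
      A.adjugate i i * A.adjugate j j - A.adjugate j i * A.adjugate i j := by
  have adjc : ∀ a b, A.adjugate a b = (A.updateCol a (Pi.single b 1)).det := by
    intro a b
    have h := congrFun (cramer_eq_adjugate_mulVec A (Pi.single b 1)) a
    rw [cramer_apply] at h
    rw [h]; simp
  have h1 := mulVec_cramer A (Pi.single i 1)
  have h2 : cramer (A.updateCol j (Pi.single j 1)) (A.det • Pi.single i 1) i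
      = ∑ k, A.adjugate k i * cramer (A.updateCol j (Pi.single j 1)) (fun l => A l k) i := by
    rw [← h1]
    have : A *ᵥ cramer A (Pi.single i 1) = ∑ k, A.adjugate k i • (fun l => A l k) := by
      ext l
      simp [mulVec, dotProduct, cramer_apply, adjc, mul_comm]
    rw [this, map_sum]
    simp
  rw [LinearMap.map_smul] at h2
  simp only [Pi.smul_apply, smul_eq_mul] at h2
  rw [cramer_apply] at h2
  rw [h2, ← Finset.add_sum_erase _ _ (Finset.mem_univ i),
    ← Finset.add_sum_erase _ _ (Finset.mem_erase.mpr ⟨hij.symm, Finset.mem_univ j⟩),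
    Finset.sum_eq_zero, add_zero]
  · have e1 : cramer (A.updateCol j (Pi.single j 1)) (fun l => A l i) i = A.adjugate j j := by
      rw [cramer_apply, adjc]
      congr 1
      ext a b
      simp only [updateCol_apply]
      split_ifs <;> simp_all
    have e2 : cramer (A.updateCol j (Pi.single j 1)) (fun l => A l j) i = - A.adjugate i j := by
      rw [cramer_apply, adjc]
      have := det_permute' (Equiv.swap i j) (A.updateCol i (Pi.single j 1))
      rw [Equiv.Perm.sign_swap hij] at this
      simp only [Units.val_neg, Units.val_one, Int.cast_neg, Int.cast_one, neg_mul, one_mul] at this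
      rw [← this]
      congr 1
      ext a b
      simp only [updateCol_apply, submatrix_apply, id]
      by_cases hb : b = i
      · subst hb; simp [hij.symm]
      · by_cases hb' : b = j
        · subst hb'; simp [hb]
        · simp [hb, hb', Equiv.swap_apply_of_ne_of_ne hb hb']
    rw [e1, e2]; ring
  · intro k hk
    simp only [Finset.mem_erase] at hk
    rw [cramer_apply]
    rw [det_zero_of_column_eq (M := (A.updateCol j (Pi.single j 1)).updateCol i fun l => A l k)
      (i := i) (j := k) (Ne.symm hk.2.1), mul_zero]
    intro l
    simp [updateCol_apply, hk.1, hk.2.1]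

/-- determinant of the top-left block of an infinite array -/
noncomputable def D (K : ℕ) (F : ℕ → ℕ → ℂ) : ℂ := (Matrix.of fun i j : Fin K => F i j).det

theorem D_congr {K : ℕ} {F G : ℕ → ℕ → ℂ} (h : ∀ i j, i < K → j < K → F i j = G i j) :
    D K F = D K G := by
  unfold D; congr 1; ext i j; exact h i j i.2 j.2

theorem D_transpose (K : ℕ) (F : ℕ → ℕ → ℂ) : D K (fun i j => F j i) = D K F := by
  unfold D; rw [← det_transpose]; rfl

theorem dodgson (K : ℕ) (F : ℕ → ℕ → ℂ) :
    D (K+2) F * D K (fun i j => F (i+1) (j+1)) =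
      D (K+1) F * D (K+1) (fun i j => F (i+1) (j+1))
      - D (K+1) (fun i j => F (i+1) j) * D (K+1) (fun i j => F i (j+1)) := by
  have adjc : ∀ {m : ℕ} (A : Matrix (Fin m) (Fin m) ℂ) a b,
      A.adjugate a b = (A.updateCol a (Pi.single b 1)).det := by
    intro m A a b
    have h := congrFun (cramer_eq_adjugate_mulVec A (Pi.single b 1)) a
    rw [cramer_apply] at h
    rw [h]; simp
  have h := jac (Matrix.of fun i j : Fin (K+2) => F i j) 0 (Fin.last (K+1)) (by simp [Fin.ext_iff])
  rw [← adjc] at h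
  simp only [adjugate_fin_succ_eq_det_submatrix] at h
  have hM : (((Matrix.of fun i j : Fin (K+2) => F i j).updateCol (Fin.last (K+1)) (Pi.single (Fin.last (K+1)) 1)).submatrix
      (Fin.succAbove 0) (Fin.succAbove 0)).det = D K (fun i j => F (i+1) (j+1)) := by
    have : (((Matrix.of fun i j : Fin (K+2) => F i j).updateCol (Fin.last (K+1)) (Pi.single (Fin.last (K+1)) 1)).submatrix
      (Fin.succAbove 0) (Fin.succAbove 0)) = 
      (Matrix.of fun i j : Fin (K+1) => F (i+1) (j+1)).updateCol (Fin.last K) (Pi.single (Fin.last K) 1) := by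
      ext a b
      simp [updateCol_apply, Pi.single_apply, Fin.ext_iff]
    rw [this, ← adjc, adjugate_fin_succ_eq_det_submatrix]
    simp only [Fin.val_last, Even.add_self, Even.neg_pow, one_pow, one_mul]
    unfold D; congr 1; ext a b
    simp
  rw [hM] at h
  have s1 : ((-1:ℂ)) ^ ((K+1)+(K+1)) = 1 := by simp
  have s2 : ((-1:ℂ)) ^ (K+1) * (-1) ^ (K+1) = 1 := by rw [← pow_add]; exact s1
  have f1 : ((Matrix.of fun i j : Fin (K+2) => F i j).submatrix (Fin.succAbove 0) (Fin.succAbove 0)).det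
     = D (K+1) (fun i j => F (i+1) (j+1)) := by unfold D; congr 1
  have f2 : ((Matrix.of fun i j : Fin (K+2) => F i j).submatrix (Fin.succAbove (Fin.last (K+1))) (Fin.succAbove (Fin.last (K+1)))).det
     = D (K+1) F := by unfold D; congr 1; ext a b; simp
  have f3 : ((Matrix.of fun i j : Fin (K+2) => F i j).submatrix (Fin.succAbove 0) (Fin.succAbove (Fin.last (K+1)))).det
     = D (K+1) (fun i j => F (i+1) j) := by unfold D; congr 1; ext a b; simp
  have f4 : ((Matrix.of fun i j : Fin (K+2) => F i j).submatrix (Fin.succAbove (Fin.last (K+1))) (Fin.succAbove 0)).det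
     = D (K+1) (fun i j => F i (j+1)) := by unfold D; congr 1; ext a b; simp
  rw [f1, f2, f3, f4] at h
  simp only [Fin.val_last, Fin.val_zero, add_zero, zero_add, pow_zero, one_mul, s1] at h
  have h0 : (Matrix.of fun i j : Fin (K+2) => F i j).det = D (K+2) F := rfl
  rw [h0] at h
  linear_combination h - D (K+1) (fun i j => F (i+1) j) * D (K+1) (fun i j => F i (j+1)) * s2

theorem row_lem (K : ℕ) (F G : ℕ → ℕ → ℂ) (c : ℕ → ℂ) (h0 : ∀ j, F 0 j = G 0 j)
    (h : ∀ i j, F (i+1) j - F i j = c i * G (i+1) j) :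
    D (K+1) F = (∏ i ∈ Finset.range K, c i) * D (K+1) G := by
  have e1 := det_mul_column (fun i : Fin (K+1) => Fin.cases (motive := fun _ => ℂ) 1 (fun i => c i) i)
    (Matrix.of fun i j : Fin (K+1) => G i j)
  rw [Fin.prod_univ_succ] at e1
  simp only [Fin.cases_zero, Fin.cases_succ, one_mul] at e1
  rw [Finset.prod_range]
  unfold D
  rw [← e1]
  apply det_eq_of_forall_row_eq_smul_add_pred (fun _ => 1)
  · intro j; simp [h0]
  · intro i j
    have := h i j
    simp
    linear_combination this

theorem col_lem (K : ℕ) (F G : ℕ → ℕ → ℂ) (c : ℕ → ℂ) (h0 : ∀ i, F i 0 = G i 0)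
    (h : ∀ i j, F i (j+1) - F i j = c j * G i (j+1)) :
    D (K+1) F = (∏ i ∈ Finset.range K, c i) * D (K+1) G := by
  rw [← D_transpose _ F, ← D_transpose _ G]
  exact row_lem K _ _ c h0 (fun i j => h j i)

theorem ones_lem (K : ℕ) (F G : ℕ → ℕ → ℂ) (c : ℕ → ℂ) (h0 : ∀ j, F 0 j = 1)
    (h : ∀ i j, F (i+1) (j+1) - F (i+1) j = c j * G i j) :
    D (K+1) F = (∏ i ∈ Finset.range K, c i) * D K G := by
  have e1 := det_mul_row (fun i : Fin K => c i) (Matrix.of fun i j : Fin K => G i j)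
  rw [Finset.prod_range]
  unfold D
  rw [← e1]
  rw [det_eq_of_forall_col_eq_smul_add_pred (B := Matrix.of fun i j : Fin (K+1) =>
    Fin.cases (motive := fun _ => ℂ) (F i 0) (fun j => F i (j+1) - F i j) j) (fun _ => 1)]
  · rw [det_succ_row_zero, Fin.sum_univ_succ, Finset.sum_eq_zero]
    · simp [h0, h]
      congr 1
      ext a b
      simp [h]
    · intro j _; simp [h0]
  · intro i; simp
  · intro i j; simp

theorem last_lem (K : ℕ) (F G : ℕ → ℕ → ℂ) (c : ℕ → ℂ) (h0 : ∀ j, F K j = G K j)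
    (h : ∀ i j, i < K → F i j - F (i+1) j = c i * G i j) :
    D (K+1) F = (∏ i ∈ Finset.range K, c i) * D (K+1) G := by
  have e1 := row_lem K (fun i j => if i ≤ K then F (K-i) (K-j) else F 0 (K-j))
    (fun i j => if i ≤ K then G (K-i) (K-j) else 0) (fun i => if i < K then c (K-1-i) else 0)
    (by intro j; simp [h0]) (by
      intro i j
      by_cases hi : i < K
      · have := h (K-1-i) (K-j) (by omega)
        have e : K - 1 - i + 1 = K - i := by omega
        have e' : K - (i+1) = K - 1 - i := by omega
        rw [e] at this
        simp [hi, hi.le, Nat.succ_le_of_lt hi, e', this]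
      · by_cases hi' : i = K
        · subst hi'; simp
        · have : ¬ i ≤ K := by omega
          have : ¬ i + 1 ≤ K := by omega
          simp [*])
  have rv : ∀ X : ℕ → ℕ → ℂ, ∀ Y : ℕ → ℂ, D (K+1) (fun i j => if i ≤ K then X (K-i) (K-j) else Y j) = D (K+1) X := by
    intro X Y
    unfold D
    rw [← det_submatrix_equiv_self Fin.revPerm (Matrix.of fun i j : Fin (K+1) => X i j)]
    congr 1
    ext a b
    have := a.2
    simp [Fin.val_rev, Nat.lt_succ_iff.mp a.2]
  rw [rv F (fun j => F 0 (K-j)), rv G (fun _ => 0)] at e1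
  rw [e1]
  congr 1
  rw [← Finset.prod_range_reflect]
  apply Finset.prod_congr rfl
  intro i hi
  simp at hi
  have : K - 1 - i < K := by omega
  have e : K - 1 - (K - 1 - i) = i := by omega
  simp [this, e]


theorem scale_lem (K : ℕ) (F G : ℕ → ℕ → ℂ) (c : ℂ) (h0 : ∀ i, F i 0 = c * G i 0)
    (h : ∀ i j, F i (j+1) = G i (j+1)) :
    D (K+1) F = c * D (K+1) G := by
  have e1 := det_mul_row (fun i : Fin (K+1) => Fin.cases (motive := fun _ => ℂ) c (fun _ => 1) i)
    (Matrix.of fun i j : Fin (K+1) => G i j)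
  rw [Fin.prod_univ_succ] at e1
  simp only [Fin.cases_zero, Fin.cases_succ, Finset.prod_const_one, mul_one] at e1
  unfold D
  rw [← e1]
  congr 1
  ext i j
  refine Fin.cases ?_ (fun j => ?_) j
  · simp [h0]
  · simp [h]

noncomputable def pr (Q x : ℂ) (K : ℕ) : ℂ := ∏ j ∈ Finset.range K, (x * Q ^ j)

theorem pr_succ (Q x : ℂ) (K : ℕ) : pr Q x (K+1) = pr Q x K * (x * Q ^ K) := by
  unfold pr; rw [Finset.prod_range_succ]

theorem pr_scale (Q x : ℂ) (K : ℕ) : pr Q (x * Q) K = Q ^ K * pr Q x K := by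
  induction K with
  | zero => simp [pr]
  | succ K ih => rw [pr_succ, pr_succ, ih]; ring

theorem pr_ne (Q x : ℂ) (hQ : Q ≠ 0) (hx : x ≠ 0) (K : ℕ) : pr Q x K ≠ 0 := by
  unfold pr
  exact Finset.prod_ne_zero_iff.mpr fun j _ => mul_ne_zero hx (pow_ne_zero _ hQ)

noncomputable def T (G : ℕ → ℕ → ℂ) (K s t : ℕ) : ℂ := D K (fun i j => G (s+i) (t+j))

theorem T_transpose (G : ℕ → ℕ → ℂ) (K s t : ℕ) : T (fun i j => G j i) K s t = T G K t s := by
  unfold T; rw [← D_transpose]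

section
variable (G : ℕ → ℕ → ℂ) (a b Q : ℂ)

theorem id3 (ha : a ≠ 0) (hQ : Q ≠ 0)
    (h1 : ∀ i j, G (i+1) (j+1) - G (i+1) j = -(a * Q ^ j) * G i j) (N s t : ℕ) :
    a * Q ^ t * Q ^ N * T G (N+1) s t * T G N (s+1) (t+1) + T G (N+1) (s+1) (t+1) * T G N s t
      = Q ^ N * T G (N+1) (s+1) t * T G N s (t+1) := by
  have hx : -(a * Q ^ t) ≠ 0 := neg_ne_zero.mpr (mul_ne_zero ha (pow_ne_zero _ hQ))
  set x := -(a * Q ^ t) with hxd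
  let F : ℕ → ℕ → ℂ := fun i j => match i with
    | 0 => 1
    | i+1 => G (s+1+i) (t+j)
  have key : ∀ K u, D (K+1) (fun i j => F i (j+u)) = pr Q (x * Q^u) K * T G K s (t+u) := by
    intro K u
    refine ones_lem K _ (fun i j => G (s+i) (t+u+j)) (fun j => x * Q^u * Q^j) (fun j => rfl) ?_
    intro i j
    have := h1 (s+i) (t+u+j)
    have e1 : s+1+i = s+i+1 := by omega
    have e2 : t+(j+1+u) = t+u+j+1 := by omega
    have e3 : t+(j+u) = t+u+j := by omega
    simp only [F, e1, e2, e3, this, hxd]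
    ring
  have d := dodgson N F
  have k0 := key (N+1) 0
  have k1 := key N 0
  have k2 := key N 1
  simp only [add_zero, pow_zero, mul_one, pow_one] at k0 k1 k2
  rw [k0, k1, k2, pr_succ, pr_scale] at d
  have m1 : D N (fun i j => F (i+1) (j+1)) = T G N (s+1) (t+1) := by
    apply D_congr; intros; simp only [F]; congr 1; omega
  have m2 : D (N+1) (fun i j => F (i+1) (j+1)) = T G (N+1) (s+1) (t+1) := by
    apply D_congr; intros; simp only [F]; congr 1; omega
  have m3 : D (N+1) (fun i j => F (i+1) j) = T G (N+1) (s+1) t := by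
    apply D_congr; intros; simp only [F]
  rw [m1, m2, m3] at d
  apply mul_left_cancel₀ (pr_ne Q x hQ hx N)
  have : a * Q ^ t = -x := by rw [hxd]; ring
  rw [this]
  linear_combination - d

theorem idA (hb : b ≠ 0) (hQ : Q ≠ 0)
    (h2 : ∀ i j, G (i+1) (j+1) - G i (j+1) = -(b * Q ^ i) * G i j) (K s t : ℕ) :
    T G (K+2) s (t+1) * T G K s (t+1) = -(b * Q^s) * Q^K *
      (T G (K+1) s (t+1) * T G (K+1) s (t+1) - T G (K+1) s t * T G (K+1) s (t+2)) := by
  have hy : -(b * Q ^ s) ≠ 0 := neg_ne_zero.mpr (mul_ne_zero hb (pow_ne_zero _ hQ))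
  set y := -(b * Q ^ s) with hyd
  let F : ℕ → ℕ → ℂ := fun i j => match i with
    | 0 => G s (t+1+j)
    | i+1 => G (s+i) (t+j)
  have key : ∀ K u, T G (K+1) s (t+1+u) = pr Q y K * D (K+1) (fun i j => F i (j+u)) := by
    intro K u
    refine row_lem K _ _ (fun j => y * Q^j) ?_ ?_
    · intro j
      simp only [F]
      congr 1; omega
    intro i j
    have := h2 (s+i) (t+u+j)
    have e1 : s+(i+1) = s+i+1 := by omega
    have e2 : t+1+u+j = t+u+j+1 := by omega
    have e3 : t+(j+u) = t+u+j := by omega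
    simp only [F, e1, e2, e3, this, hyd]
    ring
  have d := dodgson K F
  have k0 := key (K+1) 0
  have k1 := key K 0
  have k2 := key K 1
  simp only [add_zero, pr_succ] at k0 k1 k2
  have m1 : D K (fun i j => F (i+1) (j+1)) = T G K s (t+1) := by
    apply D_congr; intros; simp only [F]; congr 1; omega
  have m2 : D (K+1) (fun i j => F (i+1) (j+1)) = T G (K+1) s (t+1) := by
    apply D_congr; intros; simp only [F]; congr 1; omega
  have m3 : D (K+1) (fun i j => F (i+1) j) = T G (K+1) s t := by
    apply D_congr; intros; simp only [F]
  rw [m1, m2, m3] at d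
  have k2' : T G (K+1) s (t+2) = pr Q y K * D (K+1) (fun i j => F i (j+1)) := k2
  rw [k0, k2']
  linear_combination pr Q y K * (y * Q^K) * d - y * Q^K * T G (K+1) s (t+1) * k1

theorem idC (hb : b ≠ 0) (hQ : Q ≠ 0)
    (h2 : ∀ i j, G (i+1) (j+1) - G i (j+1) = -(b * Q ^ i) * G i j) (K s t : ℕ) :
    T G (K+2) s (t+1) * T G K (s+1) (t+1) = (b * Q^s) *
      (T G (K+1) s t * T G (K+1) (s+1) (t+2) - T G (K+1) (s+1) (t+1) * T G (K+1) s (t+1)) := by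
  have hy : b * Q ^ s ≠ 0 := mul_ne_zero hb (pow_ne_zero _ hQ)
  set y := b * Q ^ s with hyd
  let F : ℕ → ℕ → ℂ := fun i j => if i < K+1 then G (s+i) (t+j) else G (s+i) (t+1+j)
  have k0 : T G (K+2) s (t+1) = pr Q y (K+1) * D (K+2) F := by
    refine last_lem (K+1) _ _ (fun j => y * Q^j) ?_ ?_
    · intro j; simp [F]
    · intro i j hi
      have := h2 (s+i) (t+j)
      have e1 : s+(i+1) = s+i+1 := by omega
      have e2 : t+1+j = t+j+1 := by omega
      simp only [F, hi, if_true, e1, e2, hyd]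
      linear_combination -this
  have key : ∀ u, T G (K+1) (s+1) (t+1+u) = pr Q (y*Q) K * D (K+1) (fun i j => F (i+1) (j+u)) := by
    intro u
    refine last_lem K _ _ (fun j => y * Q * Q^j) ?_ ?_
    · intro j; simp only [F, lt_irrefl, if_false]; congr 1 <;> omega
    · intro i j hi
      have := h2 (s+i+1) (t+u+j)
      have e1 : s+1+(i+1) = s+i+1+1 := by omega
      have e2 : t+1+u+j = t+u+j+1 := by omega
      have e3 : s+1+i = s+i+1 := by omega
      have e4 : s+(i+1) = s+i+1 := by omega
      have e5 : t+(j+u) = t+u+j := by omega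
      have hi' : i + 1 < K+1 := by omega
      simp only [F, hi', if_true, e1, e2, e3, e4, e5, hyd]
      linear_combination -this
  have d := dodgson K F
  have k1 := key 0
  have k2 : T G (K+1) (s+1) (t+2) = _ := key 1
  have m1 : D K (fun i j => F (i+1) (j+1)) = T G K (s+1) (t+1) := by
    apply D_congr; intro i j hi hj
    have hi' : i + 1 < K+1 := by omega
    simp only [F, hi', if_true]; congr 1 <;> omega
  have m2 : D (K+1) F = T G (K+1) s t := by
    apply D_congr; intro i j hi hj
    simp only [F, hi, if_true]
  have m3 : D (K+1) (fun i j => F i (j+1)) = T G (K+1) s (t+1) := by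
    apply D_congr; intro i j hi hj
    simp only [F, hi, if_true]; congr 1; omega
  rw [m1, m2, m3] at d
  simp only [add_zero] at k1
  rw [k0, k1, k2, pr_scale, pr_succ]
  linear_combination pr Q y K * (y * Q^K) * d

theorem idB (ha : a ≠ 0) (hb : b ≠ 0) (hQ : Q ≠ 0)
    (h1 : ∀ i j, G (i+1) (j+1) - G (i+1) j = -(a * Q ^ j) * G i j)
    (h2 : ∀ i j, G (i+1) (j+1) - G i (j+1) = -(b * Q ^ i) * G i j) (K s t : ℕ) :
    T G (K+2) (s+1) (t+1) * T G K s t = (a * Q^t) * (b * Q^s) * Q^(2*K+1) *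
      (T G (K+1) (s+1) (t+1) * T G (K+1) s t
        - Q^(K+1) * T G (K+1) (s+1) t * T G (K+1) s (t+1)) := by
  have hx : -(a * Q ^ t) ≠ 0 := neg_ne_zero.mpr (mul_ne_zero ha (pow_ne_zero _ hQ))
  have hy : -(b * Q ^ s) ≠ 0 := neg_ne_zero.mpr (mul_ne_zero hb (pow_ne_zero _ hQ))
  have hxy : (a * Q^t) * (b * Q^s) = (-(a * Q ^ t)) * (-(b * Q ^ s)) := by ring
  rw [hxy]
  set x := -(a * Q ^ t) with hxd
  set y := -(b * Q ^ s) with hyd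
  let F : ℕ → ℕ → ℂ := fun i j => match i, j with
    | 0, 0 => G (s+1) (t+1)
    | 0, j+1 => G s (t+1+j)
    | i+1, 0 => Q * G (s+1+i) t
    | i+1, j+1 => G (s+i) (t+j)
  let F' : ℕ → ℕ → ℕ → ℂ := fun u i j => match j with
    | 0 => G (s+1+i) (t+u)
    | j+1 => G (s+i) (t+u+j)
  have c1 : ∀ K u, T G (K+1) (s+1) (t+u) = pr Q (x*Q^u) K * D (K+1) (F' u) := by
    intro K u
    refine col_lem K _ _ (fun j => x * Q^u * Q^j) (fun i => rfl) ?_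
    intro i j
    have := h1 (s+i) (t+u+j)
    have e1 : s+1+i = s+i+1 := by omega
    have e2 : t+u+(j+1) = t+u+j+1 := by omega
    simp only [F', e1, e2, this, hxd]
    ring
  have c2 : ∀ K, D (K+1) (F' 1) = pr Q y K * D (K+1) F := by
    intro K
    refine row_lem K _ _ (fun j => y * Q^j) ?_ ?_
    · intro j
      rcases j with _ | j <;> simp only [F', F] <;> rfl
    · intro i j
      rcases j with _ | j
      · have := h2 (s+1+i) t
        have e1 : s+1+(i+1) = s+1+i+1 := by omega
        simp only [F', F, e1, this, hyd]
        ring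
      · have := h2 (s+i) (t+j)
        have e1 : s+(i+1) = s+i+1 := by omega
        have e2 : t+1+j = t+j+1 := by omega
        simp only [F', F, e1, e2, this, hyd]
        ring
  have c3 : T G (K+1) s (t+1) = pr Q y K * D (K+1) (fun i j => F i (j+1)) := by
    refine row_lem K _ _ (fun j => y * Q^j) (fun j => rfl) ?_
    intro i j
    have := h2 (s+i) (t+j)
    have e1 : s+(i+1) = s+i+1 := by omega
    have e2 : t+1+j = t+j+1 := by omega
    simp only [F, e1, e2, this, hyd]
    ring
  have c4 : D (K+1) (fun i j => F (i+1) j) = Q * D (K+1) (F' 0) := by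
    refine scale_lem K _ _ Q (fun i => rfl) (fun i j => rfl)
  have m1 : D K (fun i j => F (i+1) (j+1)) = T G K s t := rfl
  have m2 : D (K+1) (fun i j => F (i+1) (j+1)) = T G (K+1) s t := rfl
  have d := dodgson K F
  have a1 := c1 (K+1) 1
  have a2 := c1 K 1
  have a3 : T G (K+1) (s+1) t = _ := c1 K 0
  rw [c2] at a1 a2
  simp only [pow_zero, mul_one, pow_one, pr_scale, pr_succ] at a1 a2 a3
  rw [m1, m2, c4] at d
  rw [a1, a2, a3, c3]
  linear_combination pr Q x K * pr Q y K * x * y * Q^(3*K+1) * d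

theorem id1 (ha : a ≠ 0) (hb : b ≠ 0) (hQ : Q ≠ 0)
    (h1 : ∀ i j, G (i+1) (j+1) - G (i+1) j = -(a * Q ^ j) * G i j)
    (h2 : ∀ i j, G (i+1) (j+1) - G i (j+1) = -(b * Q ^ i) * G i j) (N : ℕ)
    (hn : T G N 0 2 ≠ 0) :
    Q^N * (T G (N+1) 1 1 * T G N 0 1 - a * Q * Q^N * T G (N+1) 0 1 * T G N 1 1)
      = T G (N+1) 1 2 * T G N 0 0 := by
  have e3 := id3 G a Q ha hQ h1 N 0 1
  apply mul_right_cancel₀ hn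
  rcases N with _ | K
  · simp only [T, D, det_fin_zero] at *
    linear_combination -e3
  have eA := idA G b Q hb hQ h2 K 0 0
  have eB := idB G a b Q ha hb hQ h1 h2 K 0 1
  simp only [zero_add, pow_zero, mul_one, pow_one, Nat.reduceAdd] at *
  have hc : b * Q^K ≠ 0 := mul_ne_zero hb (pow_ne_zero _ hQ)
  apply mul_left_cancel₀ hc
  linear_combination - b * Q^K * T G (K+1) 0 1 * e3 - T G (K+2) 0 1 * eB + T G (K+2) 1 2 * eA

theorem id2 (ha : a ≠ 0) (hb : b ≠ 0) (hQ : Q ≠ 0)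
    (h2 : ∀ i j, G (i+1) (j+1) - G i (j+1) = -(b * Q ^ i) * G i j) (N : ℕ)
    (hn : T G N 1 1 ≠ 0) :
    T G (N+1) 1 1 * T G N 0 1 - Q^N * T G (N+1) 0 1 * T G N 1 1
      = - b * Q^N * T G (N+1) 0 0 * T G N 1 2 := by
  have e4 := id3 (fun i j => G j i) b Q hb hQ (fun i j => h2 j i) N 0 0
  simp only [T_transpose] at e4
  apply mul_right_cancel₀ hn
  rcases N with _ | K
  · simp only [T, D, det_fin_zero] at *
    linear_combination e4
  have eA := idA G b Q hb hQ h2 K 1 0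
  have eC := idC G b Q hb hQ h2 K 0 0
  simp only [zero_add, pow_zero, mul_one, pow_one, Nat.reduceAdd] at *
  apply mul_left_cancel₀ hb
  linear_combination b * T G (K+1) 1 2 * e4 + T G (K+2) 1 1 * eC - T G (K+2) 0 1 * eA
end
end QP


/-- the multiplicative formulas (Proposition `multi` of the paper)
for `f₀, f₁` built from the determinants `φ_ν^N(n)`. -/
theorem qPIII_multiplicative_formulas (q a0 a1 : ℂ)
    (hq : q ≠ 0) (ha0 : a0 ≠ 0) (ha1 : a1 ≠ 0)
    (H : ℤ → ℤ → ℂ)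
    (hH1 : ∀ m n : ℤ, H m (n + 1) - H m n = -(a0 ^ 2 * q ^ (2 * n)) * H (m - 1) n)
    (hH2 : ∀ m n : ℤ, H (m + 1) n - H m n = -(a0 ^ 2 * a1 ^ 2 * q ^ (2 * m)) * H m (n - 1))
    (ν : ℤ) (N : ℕ)
    -- all determinants occurring in denominators are nonzero
    (hphi : ∀ n : ℤ, phiDet H N ν n ≠ 0 ∧ phiDet H (N + 1) ν n ≠ 0 ∧
      phiDet H N (ν - 1) n ≠ 0 ∧ phiDet H (N + 1) (ν - 1) n ≠ 0)
    (f0 f1 : ℤ → ℂ)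
    (hf0 : ∀ n : ℤ, f0 n = -(a0 * q ^ (n + 2 * (N : ℤ))) *
      (phiDet H (N + 1) (ν - 1) n * phiDet H N ν n) /
      (phiDet H (N + 1) ν n * phiDet H N (ν - 1) n))
    (hf1 : ∀ n : ℤ, f1 n = 1 / (a0 ^ 2 * a1 * q ^ (n + ν + 2 * (N : ℤ) - 2)) *
      ((phiDet H (N + 1) ν n * phiDet H N (ν - 1) (n - 1)) /
        (phiDet H (N + 1) (ν - 1) (n - 1) * phiDet H N ν n))) :
    ∀ n : ℤ,
      (1 + a0 * q ^ n * f0 n = q ^ (-2 * (N : ℤ)) *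
        (phiDet H (N + 1) ν (n + 1) * phiDet H N (ν - 1) (n - 1)) /
        (phiDet H (N + 1) ν n * phiDet H N (ν - 1) n)) ∧
      (1 + f0 n / (a0 * q ^ n) = -(a0 ^ 2 * a1 ^ 2 * q ^ (2 * (ν + (N : ℤ) - 1))) *
        (phiDet H (N + 1) (ν - 1) (n - 1) * phiDet H N ν (n + 1)) /
        (phiDet H (N + 1) ν n * phiDet H N (ν - 1) n)) ∧
      (1 + a1 * q ^ (ν - n) * f1 n = 1 / (a0 ^ 2 * q ^ (2 * (n - 1))) *
        ((phiDet H (N + 1) ν (n - 1) * phiDet H N (ν - 1) n) /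
          (phiDet H (N + 1) (ν - 1) (n - 1) * phiDet H N ν n))) ∧
      (1 + f1 n / (a1 * q ^ (ν - n)) = 1 / (a0 ^ 2 * a1 ^ 2 * q ^ (2 * (ν - 1))) *
        ((phiDet H (N + 1) (ν - 1) n * phiDet H N ν (n - 1)) /
          (phiDet H (N + 1) (ν - 1) (n - 1) * phiDet H N ν n))) := by
  intro n
  set G : ℕ → ℕ → ℂ := fun i j => H (ν - 1 + i) (n - 1 + j) with hG
  have hQ : q ^ 2 ≠ 0 := pow_ne_zero _ hq
  have ha : a0 ^ 2 * q ^ (2 * (n - 1)) ≠ 0 := mul_ne_zero (pow_ne_zero _ ha0) (zpow_ne_zero _ hq)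
  have hb : a0 ^ 2 * a1 ^ 2 * q ^ (2 * (ν - 1)) ≠ 0 :=
    mul_ne_zero (mul_ne_zero (pow_ne_zero _ ha0) (pow_ne_zero _ ha1)) (zpow_ne_zero _ hq)
  have hpw : ∀ (m : ℤ) (j : ℕ), q ^ (2 * (m + j)) = q ^ (2 * m) * (q ^ 2) ^ j := by
    intro m j
    rw [← pow_mul, ← zpow_natCast, ← zpow_add₀ hq]
    congr 1; push_cast; ring
  have h1 : ∀ i j, G (i+1) (j+1) - G (i+1) j
      = -(a0 ^ 2 * q ^ (2 * (n - 1)) * (q ^ 2) ^ j) * G i j := by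
    intro i j
    have := hH1 (ν - 1 + i + 1) (n - 1 + j)
    rw [hpw, add_sub_cancel_right] at this
    simp only [hG]
    push_cast
    rw [← add_assoc, ← add_assoc, this]
    ring
  have h2 : ∀ i j, G (i+1) (j+1) - G i (j+1)
      = -(a0 ^ 2 * a1 ^ 2 * q ^ (2 * (ν - 1)) * (q ^ 2) ^ i) * G i j := by
    intro i j
    have := hH2 (ν - 1 + i) (n - 1 + j + 1)
    rw [hpw, add_sub_cancel_right] at this
    simp only [hG]
    push_cast
    rw [← add_assoc, ← add_assoc, this]
    ring
  have hT : ∀ (K s t : ℕ) (μ m : ℤ), μ = ν - 1 + s → m = n - 1 + t →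
      phiDet H K μ m = QP.T G K s t := by
    intro K s t μ m h h'
    subst h h'
    unfold phiDet QP.T QP.D
    congr 1
    ext i j
    simp only [hG, Matrix.of_apply]
    push_cast
    rw [add_assoc, add_assoc]
  have t00 : ∀ K, phiDet H K (ν - 1) (n - 1) = QP.T G K 0 0 := fun K => hT K 0 0 _ _ (by simp) (by simp)
  have t01 : ∀ K, phiDet H K (ν - 1) n = QP.T G K 0 1 := fun K => hT K 0 1 _ _ (by simp) (by simp)
  have t02 : ∀ K, phiDet H K (ν - 1) (n + 1) = QP.T G K 0 2 :=
    fun K => hT K 0 2 _ _ (by simp) (by push_cast; ring)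
  have t10 : ∀ K, phiDet H K ν (n - 1) = QP.T G K 1 0 := fun K => hT K 1 0 _ _ (by simp) (by simp)
  have t11 : ∀ K, phiDet H K ν n = QP.T G K 1 1 := fun K => hT K 1 1 _ _ (by simp) (by simp)
  have t12 : ∀ K, phiDet H K ν (n + 1) = QP.T G K 1 2 :=
    fun K => hT K 1 2 _ _ (by simp) (by push_cast; ring)
  have n0 := hphi (n - 1)
  have n1 := hphi n
  have n2 := hphi (n + 1)
  rw [hf0, hf1]
  simp only [t00, t01, t02, t10, t11, t12] at n0 n1 n2 ⊢
  have e1 := QP.id1 G _ _ _ ha hb hQ h1 h2 N n2.2.2.1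
  have e2 := QP.id2 G _ _ _ ha hb hQ h2 N n1.1
  have e3 := QP.id3 G _ _ ha hQ h1 N 0 0
  have e4 := QP.id3 (fun i j => G j i) _ _ hb hQ (fun i j => h2 j i) N 0 0
  simp only [QP.T_transpose, pow_zero, mul_one, zero_add] at e3 e4
  obtain ⟨x1, x2, x3, x4⟩ := n1
  obtain ⟨y1, y2, y3, y4⟩ := n0
  have p1 : q ^ (2 * (n - 1)) = (q ^ n) ^ 2 / q ^ 2 := by
    rw [mul_sub, zpow_sub₀ hq, mul_comm, zpow_mul]; norm_cast
  have p2 : q ^ (2 * (ν - 1)) = (q ^ ν) ^ 2 / q ^ 2 := by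
    rw [mul_sub, zpow_sub₀ hq, mul_comm, zpow_mul]; norm_cast
  have p3 : q ^ (n + 2 * (N : ℤ)) = q ^ n * (q ^ 2) ^ N := by
    rw [zpow_add₀ hq, zpow_mul]; norm_cast
  have p4 : q ^ (n + ν + 2 * (N : ℤ) - 2) = q ^ n * q ^ ν * (q ^ 2) ^ N / q ^ 2 := by
    rw [zpow_sub₀ hq, zpow_add₀ hq, zpow_add₀ hq, zpow_mul]; norm_cast
  have p5 : q ^ (-2 * (N : ℤ)) = ((q ^ 2) ^ N)⁻¹ := by
    rw [neg_mul, zpow_neg, zpow_mul]; norm_cast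
  have p6 : q ^ (2 * (ν + (N : ℤ) - 1)) = (q ^ ν) ^ 2 * (q ^ 2) ^ N / q ^ 2 := by
    rw [show 2 * (ν + (N : ℤ) - 1) = 2 * (ν - 1 + N) by ring, hpw, p2]; ring
  have p7 : q ^ (ν - n) = q ^ ν / q ^ n := zpow_sub₀ hq _ _
  rw [p1] at e1 e3 
  rw [p2] at e2 e4
  rw [p3, p4, p5, p6, p7, p1, p2]
  have hU : q ^ n ≠ 0 := zpow_ne_zero _ hq
  have hV : q ^ ν ≠ 0 := zpow_ne_zero _ hq
  have hR : (q ^ 2) ^ N ≠ 0 := pow_ne_zero _ hQ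
  generalize q ^ n = U at *
  generalize q ^ ν = V at *
  generalize (q ^ 2) ^ N = R at *
  refine ⟨?_, ?_, ?_, ?_⟩
  · field_simp at e1 ⊢
    linear_combination e1
  · field_simp at e2 ⊢
    linear_combination e2
  · field_simp at e3 ⊢
    linear_combination e3
  · field_simp at e4 ⊢
    linear_combination e4
end
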